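/- arXiv:2602.04005 — 4 statements merged into one kernel-verified Lean document; each statement's English description precedes it below -/
import Mathlib

section
/- Let Ω = (a,b) ⊂ ℝ be a bounded open interval with a < b, let D > 0, α ≥ 0 and T > 0, let γ, ĥ ∈ C²([0,∞)) with γ > 0 and ĥ > 0 on [0,∞), and let Γ ∈ C¹([0,∞)) with Γ ≥ 0 on [0,∞). If (u,Θ) and (ũ,Θ̃) are two classical solutions of the MGT–heat system on Ω × (0,T) with Θ ≥ 0 and Θ̃ ≥ 0 on [a,b] × [0,T], and if u(·,0) = ũ(·,0), u_t(·,0) = ũ_t(·,0), u_tt(·,0) = ũ_tt(·,0) and Θ(·,0) = Θ̃(·,0) on [a,b], then u ≡ ũ and Θ ≡ Θ̃ on [a,b] × [0,T]. -/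
/-!
Uniqueness follows from an energy estimate for the differences `w = u - u'` and `z = Θ - Θ'`.

Testing the wave equation with `w_tt` and the heat equation with `z` suggests the energy density
`½ w_tt² + ½ γ(Θ) w_xt² + h(Θ) w_x w_xt + ½ K w_x² + ½ z²`. Since `γ(Θ)` is bounded below on the
compact cylinder, it is coercive in `(w_tt, w_xt, w_x, z)` for large `K` (`density_coercive`).
Its time derivative is the divergence of a flux that vanishes at the end points, minus `D z_x²`,
plus a remainder (`pdt_energyDensity`). The quasilinear terms, such as
`((γ(Θ) - γ(Θ')) u'_xt)_x`, contribute only `z` and `z_x` times bounded functions, because the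
coefficients are Lipschitz on the compact range of the temperatures; the products `w_tt z_x` are
absorbed by `D z_x²`, so that the remainder is at most a constant times the energy density
(`remainder_le`). Integrating in `x` and applying Gronwall's inequality (`eq_zero_of_density_le`)
shows that the energy vanishes, so `w_tt = 0` and `z = 0`, and two integrations in time give
`w = 0`. The argument takes place pointwise in the open cylinder, so the equations never have to be
extended to its boundary.
-/

open MeasureTheory Set

/-- Partial derivative in the space variable. -/
noncomputable def pdx (f : ℝ → ℝ → ℝ) : ℝ → ℝ → ℝ := fun x t => deriv (fun y => f y t) x

/-- Partial derivative in the time variable. -/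
noncomputable def pdt (f : ℝ → ℝ → ℝ) : ℝ → ℝ → ℝ := fun x t => deriv (fun s => f x s) t

/-- A classical solution of the MGT–heat system
`u_ttt + α u_tt = (γ(Θ) u_xt)_x + (ĥ(Θ) u_x)_x`,
`Θ_t = D Θ_xx + Γ(Θ) u_xt²`
on `(a,b) × (0,T)` with homogeneous Neumann boundary conditions. -/
def IsMGTSolution (a b D α T : ℝ) (γ hγ Γ : ℝ → ℝ) (u Θ : ℝ → ℝ → ℝ) : Prop :=
  ContDiff ℝ (⊤ : ℕ∞) (Function.uncurry u) ∧ ContDiff ℝ (⊤ : ℕ∞) (Function.uncurry Θ) ∧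
  (∀ x ∈ Ioo a b, ∀ t ∈ Ioo (0:ℝ) T,
      pdt (pdt (pdt u)) x t + α * pdt (pdt u) x t
        = pdx (fun y s => γ (Θ y s) * pdx (pdt u) y s) x t
          + pdx (fun y s => hγ (Θ y s) * pdx u y s) x t) ∧
  (∀ x ∈ Ioo a b, ∀ t ∈ Ioo (0:ℝ) T,
      pdt Θ x t = D * pdx (pdx Θ) x t + Γ (Θ x t) * (pdx (pdt u) x t) ^ 2) ∧
  (∀ t ∈ Ioo (0:ℝ) T,
      pdx u a t = 0 ∧ pdx u b t = 0 ∧ pdx Θ a t = 0 ∧ pdx Θ b t = 0)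

/-! ### Calculus of partial derivatives -/

lemma hasDerivAt_pdx {f : ℝ → ℝ → ℝ} (hf : Differentiable ℝ (Function.uncurry f)) (x t : ℝ) :
    HasDerivAt (fun y => f y t) (pdx f x t) x := by
  have h : DifferentiableAt ℝ (fun y => f y t) x :=
    (hf (x, t)).comp (f := fun y => (y, t)) x (differentiableAt_id.prodMk (differentiableAt_const t))
  exact h.hasDerivAt

lemma hasDerivAt_pdt {f : ℝ → ℝ → ℝ} (hf : Differentiable ℝ (Function.uncurry f)) (x t : ℝ) :
    HasDerivAt (fun s => f x s) (pdt f x t) t := by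
  have h : DifferentiableAt ℝ (fun s => f x s) t :=
    (hf (x, t)).comp t ((differentiableAt_const x).prodMk differentiableAt_id)
  exact h.hasDerivAt

lemma pdx_eq_fderiv {f : ℝ → ℝ → ℝ} (hf : Differentiable ℝ (Function.uncurry f)) (x t : ℝ) :
    pdx f x t = fderiv ℝ (Function.uncurry f) (x, t) (1, 0) := by
  have h := (hf (x, t)).hasFDerivAt.comp_hasDerivAt x
    ((hasDerivAt_id x).prodMk (hasDerivAt_const x t))
  exact h.deriv

lemma pdt_eq_fderiv {f : ℝ → ℝ → ℝ} (hf : Differentiable ℝ (Function.uncurry f)) (x t : ℝ) :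
    pdt f x t = fderiv ℝ (Function.uncurry f) (x, t) (0, 1) := by
  have h := (hf (x, t)).hasFDerivAt.comp_hasDerivAt t
    ((hasDerivAt_const t x).prodMk (hasDerivAt_id t))
  exact h.deriv

lemma contDiff_pdx {f : ℝ → ℝ → ℝ} {m n : WithTop ℕ∞} (hf : ContDiff ℝ n (Function.uncurry f))
    (hmn : m + 1 ≤ n) : ContDiff ℝ m (Function.uncurry (pdx f)) := by
  have hd : Differentiable ℝ (Function.uncurry f) :=
    (hf.of_le hmn).differentiable (by simp)
  have h : Function.uncurry (pdx f) = fun p => fderiv ℝ (Function.uncurry f) p (1, 0) := by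
    ext ⟨x, t⟩
    exact pdx_eq_fderiv hd x t
  rw [h]
  exact (hf.fderiv_right hmn).clm_apply contDiff_const

lemma contDiff_pdt {f : ℝ → ℝ → ℝ} {m n : WithTop ℕ∞} (hf : ContDiff ℝ n (Function.uncurry f))
    (hmn : m + 1 ≤ n) : ContDiff ℝ m (Function.uncurry (pdt f)) := by
  have hd : Differentiable ℝ (Function.uncurry f) :=
    (hf.of_le hmn).differentiable (by simp)
  have h : Function.uncurry (pdt f) = fun p => fderiv ℝ (Function.uncurry f) p (0, 1) := by
    ext ⟨x, t⟩
    exact pdt_eq_fderiv hd x t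
  rw [h]
  exact (hf.fderiv_right hmn).clm_apply contDiff_const

/-- Mixed partial derivatives of a smooth function commute. -/
lemma pdx_pdt_comm {f : ℝ → ℝ → ℝ} (hf : ContDiff ℝ (⊤ : ℕ∞) (Function.uncurry f)) (x t : ℝ) :
    pdx (pdt f) x t = pdt (pdx f) x t := by
  have hd : Differentiable ℝ (Function.uncurry f) := hf.differentiable (by simp)
  have hx : ContDiff ℝ (⊤ : ℕ∞) (Function.uncurry (pdx f)) := contDiff_pdx hf le_rfl
  have ht : ContDiff ℝ (⊤ : ℕ∞) (Function.uncurry (pdt f)) := contDiff_pdt hf le_rfl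
  have hdf : Differentiable ℝ (fderiv ℝ (Function.uncurry f)) :=
    (hf.fderiv_right (m := (⊤ : ℕ∞)) le_rfl).differentiable (by simp)
  have key : ∀ v w : ℝ × ℝ,
      fderiv ℝ (fun p => fderiv ℝ (Function.uncurry f) p v) (x, t) w
        = fderiv ℝ (fderiv ℝ (Function.uncurry f)) (x, t) w v := by
    intro v w
    rw [fderiv_clm_apply (hdf _) (differentiableAt_const v)]
    simp
  have h1 : Function.uncurry (pdx f) = fun p => fderiv ℝ (Function.uncurry f) p (1, 0) := by
    ext ⟨x, t⟩
    exact pdx_eq_fderiv hd x t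
  have h2 : Function.uncurry (pdt f) = fun p => fderiv ℝ (Function.uncurry f) p (0, 1) := by
    ext ⟨x, t⟩
    exact pdt_eq_fderiv hd x t
  rw [pdx_eq_fderiv (ht.differentiable (by simp)), pdt_eq_fderiv (hx.differentiable (by simp)),
    h1, h2, key, key]
  exact second_derivative_symmetric (fun y => (hd y).hasFDerivAt) (hdf (x, t)).hasFDerivAt _ _

/-! ### The energy argument -/

lemma exists_abs_le {f : ℝ → ℝ → ℝ} (hf : Continuous (Function.uncurry f)) (a b c d : ℝ) :
    ∃ C, 0 ≤ C ∧ ∀ x ∈ Icc a b, ∀ t ∈ Icc c d, |f x t| ≤ C := by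
  obtain ⟨C, hC⟩ := ((isCompact_Icc (a := a) (b := b)).prod
    (isCompact_Icc (a := c) (b := d))).exists_bound_of_continuousOn hf.continuousOn
  refine ⟨max C 0, le_max_right _ _, fun x hx t ht => le_max_of_le_left ?_⟩
  exact hC (x, t) ⟨hx, ht⟩

/-- Differentiation of `∫ e(x,t) dx` in `t` under the integral sign. -/
lemma hasDerivAt_integral_pdt {e : ℝ → ℝ → ℝ} (he : ContDiff ℝ 1 (Function.uncurry e))
    (a b t : ℝ) :
    HasDerivAt (fun s => ∫ x in a..b, e x s) (∫ x in a..b, pdt e x t) t := by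
  have hc : ∀ s, Continuous (fun x => e x s) := fun s =>
    he.continuous.comp (continuous_id.prodMk continuous_const)
  have het : Continuous (Function.uncurry (pdt e)) :=
    (contDiff_pdt (m := 0) he (by simp)).continuous
  have hct : ∀ s, Continuous (fun x => pdt e x s) := fun s =>
    het.comp (continuous_id.prodMk continuous_const)
  obtain ⟨C, -, hC⟩ := exists_abs_le het (min a b) (max a b) (t - 1) (t + 1)
  refine (intervalIntegral.hasDerivAt_integral_of_dominated_loc_of_deriv_le
    (F := fun s x => e x s) (F' := fun s x => pdt e x s) (bound := fun _ => C)
    (s := Icc (t - 1) (t + 1)) (Icc_mem_nhds (by linarith) (by linarith))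
    (Filter.Eventually.of_forall fun s => (hc s).aestronglyMeasurable)
    ((hc t).intervalIntegrable _ _) (hct t).aestronglyMeasurable
    (Filter.Eventually.of_forall fun x hx s hs => ?_) intervalIntegrable_const
    (Filter.Eventually.of_forall fun x _ s _ =>
      hasDerivAt_pdt (he.differentiable (by simp)) x s)).2
  exact hC x (Ioc_subset_Icc_self hx) s hs

/-- A nonnegative density `e`, vanishing initially, whose time derivative is at most a divergence
`F_x` with no flux through the boundary plus `C e`, vanishes: integrate in `x` and apply
Gronwall's inequality to `∫ e dx`. -/
lemma eq_zero_of_density_le {a b T C : ℝ} (hab : a < b) {e F : ℝ → ℝ → ℝ}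
    (he : ContDiff ℝ 1 (Function.uncurry e)) (hF : ContDiff ℝ 1 (Function.uncurry F))
    (hFa : ∀ t ∈ Ioo 0 T, F a t = 0) (hFb : ∀ t ∈ Ioo 0 T, F b t = 0)
    (hle : ∀ x ∈ Ioo a b, ∀ t ∈ Ioo 0 T, pdt e x t ≤ pdx F x t + C * e x t)
    (hnn : ∀ x ∈ Icc a b, ∀ t ∈ Icc 0 T, 0 ≤ e x t)
    (h0 : ∀ x ∈ Ioo a b, e x 0 = 0) :
    ∀ x ∈ Icc a b, ∀ t ∈ Icc 0 T, e x t = 0 := by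
  have hc : ∀ s, Continuous (fun x => e x s) := fun s =>
    he.continuous.comp (continuous_id.prodMk continuous_const)
  have hct : ∀ s, Continuous (fun x => pdt e x s) := fun s =>
    (contDiff_pdt (m := 0) he (by simp)).continuous.comp
      (continuous_id.prodMk continuous_const)
  have hFx : ∀ s, Continuous (fun x => pdx F x s) := fun s =>
    (contDiff_pdx (m := 0) hF (by simp)).continuous.comp
      (continuous_id.prodMk continuous_const)
  set E : ℝ → ℝ := fun s => ∫ x in a..b, e x s with hE
  have hE' : ∀ t, HasDerivAt E (∫ x in a..b, pdt e x t) t := hasDerivAt_integral_pdt he a b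
  have hEle : ∀ t ∈ Ioo 0 T, (∫ x in a..b, pdt e x t) ≤ C * E t := by
    intro t ht
    have h1 : (∫ x in a..b, pdt e x t) ≤ ∫ x in a..b, (pdx F x t + C * e x t) :=
      intervalIntegral.integral_mono_on_of_le_Ioo hab.le ((hct t).intervalIntegrable _ _)
        (((hFx t).add ((hc t).const_mul C)).intervalIntegrable _ _) (fun x hx => hle x hx t ht)
    rw [intervalIntegral.integral_add ((hFx t).intervalIntegrable _ _)
      (((hc t).const_mul C).intervalIntegrable _ _), intervalIntegral.integral_const_mul,
      intervalIntegral.integral_eq_sub_of_hasDerivAt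
        (fun x _ => hasDerivAt_pdx (hF.differentiable (by simp)) x t)
        ((hFx t).intervalIntegrable _ _), hFa t ht, hFb t ht] at h1
    simpa using h1
  have hG : ∀ t, HasDerivAt (fun s => Real.exp (-C * s) * E s)
      (Real.exp (-C * t) * ((∫ x in a..b, pdt e x t) - C * E t)) t := by
    intro t
    have h1 : HasDerivAt (fun s => Real.exp (-C * s)) (Real.exp (-C * t) * (-C * 1)) t :=
      ((hasDerivAt_id t).const_mul (-C)).exp
    refine (h1.mul (hE' t)).congr_deriv ?_
    ring
  have hanti : AntitoneOn (fun s => Real.exp (-C * s) * E s) (Icc 0 T) := by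
    refine antitoneOn_of_deriv_nonpos (convex_Icc 0 T)
      (fun t _ => (hG t).continuousAt.continuousWithinAt)
      (fun t _ => (hG t).differentiableAt.differentiableWithinAt) ?_
    intro t ht
    rw [interior_Icc] at ht
    rw [(hG t).deriv]
    exact mul_nonpos_of_nonneg_of_nonpos (Real.exp_pos _).le (sub_nonpos.2 (hEle t ht))
  have hE0 : E 0 = 0 := by
    have : E 0 = ∫ _ in a..b, (0 : ℝ) :=
      intervalIntegral.integral_congr_Ioo_of_le hab.le (fun x hx => h0 x hx)
    simpa using this
  intro x hx t ht
  by_contra hne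
  have hpos : 0 < E t := intervalIntegral.integral_pos hab (hc t).continuousOn
    (fun y hy => hnn y (Ioc_subset_Icc_self hy) t ht)
    ⟨x, hx, lt_of_le_of_ne (hnn x hx t ht) (Ne.symm hne)⟩
  have h2 := hanti (left_mem_Icc.2 (ht.1.trans ht.2)) ht ht.1
  simp only [hE0, mul_zero] at h2
  exact absurd h2 (not_le.2 (mul_pos (Real.exp_pos _) hpos))

/-! ### Energy density and flux of the difference of two solutions -/

/-- Energy density of a displacement difference `w` and a temperature difference `z`, with the
coefficients frozen at the temperature `Θ`. The cross term `h(Θ) w_x w_xt` accounts for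
`(h(Θ) w_x)_x`, and the weight `K` of `w_x²` is chosen large enough to keep the density coercive. -/
noncomputable def energyDensity (K : ℝ) (γ h : ℝ → ℝ) (Θ w z : ℝ → ℝ → ℝ) : ℝ → ℝ → ℝ :=
  fun x t => 1 / 2 * pdt (pdt w) x t ^ 2 + 1 / 2 * (γ (Θ x t) * pdx (pdt w) x t ^ 2)
    + h (Θ x t) * (pdx w x t * pdx (pdt w) x t) + K / 2 * pdx w x t ^ 2 + 1 / 2 * z x t ^ 2

/-- Flux associated with `energyDensity`; it vanishes wherever `w_x`, `w_xt` and `z_x` do. -/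
noncomputable def energyFlux (D : ℝ) (γ h : ℝ → ℝ) (Θ w z : ℝ → ℝ → ℝ) : ℝ → ℝ → ℝ :=
  fun x t => pdt (pdt w) x t * (γ (Θ x t) * pdx (pdt w) x t + h (Θ x t) * pdx w x t)
    + D * (z x t * pdx z x t)

lemma hasDerivAt_comp_pdx {g : ℝ → ℝ} (hg : ContDiff ℝ 2 g) {Θ : ℝ → ℝ → ℝ}
    (hΘ : ContDiff ℝ (⊤ : ℕ∞) (Function.uncurry Θ)) (x t : ℝ) :
    HasDerivAt (fun y => g (Θ y t)) (deriv g (Θ x t) * pdx Θ x t) x :=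
  ((hg.differentiable (by simp) (Θ x t)).hasDerivAt).comp x
    (hasDerivAt_pdx (hΘ.differentiable (by simp)) x t)

lemma hasDerivAt_comp_pdt {g : ℝ → ℝ} (hg : ContDiff ℝ 2 g) {Θ : ℝ → ℝ → ℝ}
    (hΘ : ContDiff ℝ (⊤ : ℕ∞) (Function.uncurry Θ)) (x t : ℝ) :
    HasDerivAt (fun s => g (Θ x s)) (deriv g (Θ x t) * pdt Θ x t) t :=
  ((hg.differentiable (by simp) (Θ x t)).hasDerivAt).comp t
    (hasDerivAt_pdt (hΘ.differentiable (by simp)) x t)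

lemma pdx_comp_mul {g : ℝ → ℝ} (hg : ContDiff ℝ 2 g) {Θ f : ℝ → ℝ → ℝ}
    (hΘ : ContDiff ℝ (⊤ : ℕ∞) (Function.uncurry Θ))
    (hf : ContDiff ℝ (⊤ : ℕ∞) (Function.uncurry f)) (x t : ℝ) :
    pdx (fun y s => g (Θ y s) * f y s) x t
      = deriv g (Θ x t) * pdx Θ x t * f x t + g (Θ x t) * pdx f x t :=
  ((hasDerivAt_comp_pdx hg hΘ x t).mul
    (hasDerivAt_pdx (hf.differentiable (by simp)) x t)).deriv

lemma contDiff_energyDensity (K : ℝ) {γ h : ℝ → ℝ} {Θ w z : ℝ → ℝ → ℝ}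
    (hγ : ContDiff ℝ 2 γ) (hh : ContDiff ℝ 2 h)
    (hΘ : ContDiff ℝ (⊤ : ℕ∞) (Function.uncurry Θ)) (hw : ContDiff ℝ (⊤ : ℕ∞) (Function.uncurry w))
    (hz : ContDiff ℝ (⊤ : ℕ∞) (Function.uncurry z)) :
    ContDiff ℝ 1 (Function.uncurry (energyDensity K γ h Θ w z)) := by
  have h1 : (1 : WithTop ℕ∞) ≤ ((⊤ : ℕ∞) : WithTop ℕ∞) := by simp
  have hwt := contDiff_pdt (m := (⊤ : ℕ∞)) hw le_rfl
  have hp := (contDiff_pdt (m := (⊤ : ℕ∞)) hwt le_rfl).of_le h1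
  have hq := (contDiff_pdx (m := (⊤ : ℕ∞)) hwt le_rfl).of_le h1
  have hr := (contDiff_pdx (m := (⊤ : ℕ∞)) hw le_rfl).of_le h1
  have hγΘ := (hγ.of_le one_le_two).comp (hΘ.of_le h1)
  have hhΘ := (hh.of_le one_le_two).comp (hΘ.of_le h1)
  exact ((((contDiff_const.mul (hp.pow 2)).add (contDiff_const.mul (hγΘ.mul (hq.pow 2)))).add
    (hhΘ.mul (hr.mul hq))).add (contDiff_const.mul (hr.pow 2))).add
    (contDiff_const.mul ((hz.of_le h1).pow 2))

lemma contDiff_energyFlux (D : ℝ) {γ h : ℝ → ℝ} {Θ w z : ℝ → ℝ → ℝ}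
    (hγ : ContDiff ℝ 2 γ) (hh : ContDiff ℝ 2 h)
    (hΘ : ContDiff ℝ (⊤ : ℕ∞) (Function.uncurry Θ)) (hw : ContDiff ℝ (⊤ : ℕ∞) (Function.uncurry w))
    (hz : ContDiff ℝ (⊤ : ℕ∞) (Function.uncurry z)) :
    ContDiff ℝ 1 (Function.uncurry (energyFlux D γ h Θ w z)) := by
  have h1 : (1 : WithTop ℕ∞) ≤ ((⊤ : ℕ∞) : WithTop ℕ∞) := by simp
  have hwt := contDiff_pdt (m := (⊤ : ℕ∞)) hw le_rfl
  have hp := (contDiff_pdt (m := (⊤ : ℕ∞)) hwt le_rfl).of_le h1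
  have hq := (contDiff_pdx (m := (⊤ : ℕ∞)) hwt le_rfl).of_le h1
  have hr := (contDiff_pdx (m := (⊤ : ℕ∞)) hw le_rfl).of_le h1
  have hzx := (contDiff_pdx (m := (⊤ : ℕ∞)) hz le_rfl).of_le h1
  have hγΘ := (hγ.of_le one_le_two).comp (hΘ.of_le h1)
  have hhΘ := (hh.of_le one_le_two).comp (hΘ.of_le h1)
  exact (hp.mul ((hγΘ.mul hq).add (hhΘ.mul hr))).add
    (contDiff_const.mul ((hz.of_le h1).mul hzx))

/-- The local energy balance: up to the divergence of the flux, the time derivative of the energy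
density only involves `w_tt` tested against the wave residual, `z` tested against the heat
residual, the dissipation `-D z_x²` and terms quadratic in `w_x`, `w_xt`. -/
lemma pdt_energyDensity (K D : ℝ) {γ h : ℝ → ℝ} {Θ w z : ℝ → ℝ → ℝ}
    (hγ : ContDiff ℝ 2 γ) (hh : ContDiff ℝ 2 h)
    (hΘ : ContDiff ℝ (⊤ : ℕ∞) (Function.uncurry Θ)) (hw : ContDiff ℝ (⊤ : ℕ∞) (Function.uncurry w))
    (hz : ContDiff ℝ (⊤ : ℕ∞) (Function.uncurry z)) (x t : ℝ) :
    pdt (energyDensity K γ h Θ w z) x t = pdx (energyFlux D γ h Θ w z) x t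
      + pdt (pdt w) x t * (pdt (pdt (pdt w)) x t
        - (deriv γ (Θ x t) * pdx Θ x t * pdx (pdt w) x t + γ (Θ x t) * pdx (pdx (pdt w)) x t)
        - (deriv h (Θ x t) * pdx Θ x t * pdx w x t + h (Θ x t) * pdx (pdx w) x t))
      + 1 / 2 * (deriv γ (Θ x t) * pdt Θ x t) * pdx (pdt w) x t ^ 2
      + deriv h (Θ x t) * pdt Θ x t * (pdx w x t * pdx (pdt w) x t)
      + h (Θ x t) * pdx (pdt w) x t ^ 2 + K * (pdx w x t * pdx (pdt w) x t)
      + z x t * (pdt z x t - D * pdx (pdx z) x t) - D * pdx z x t ^ 2 := by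
  have htop : ((⊤ : ℕ∞) : WithTop ℕ∞) ≠ 0 := by simp
  have hwt := contDiff_pdt (m := (⊤ : ℕ∞)) hw le_rfl
  have hp := contDiff_pdt (m := (⊤ : ℕ∞)) hwt le_rfl
  have hq := contDiff_pdx (m := (⊤ : ℕ∞)) hwt le_rfl
  have hr := contDiff_pdx (m := (⊤ : ℕ∞)) hw le_rfl
  have hzx := contDiff_pdx (m := (⊤ : ℕ∞)) hz le_rfl
  have c1 : pdt (pdx (pdt w)) x t = pdx (pdt (pdt w)) x t := (pdx_pdt_comm hwt x t).symm
  have c2 : pdt (pdx w) x t = pdx (pdt w) x t := (pdx_pdt_comm hw x t).symm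
  have dpt := hasDerivAt_pdt (hp.differentiable htop) x t
  have dqt := hasDerivAt_pdt (hq.differentiable htop) x t
  have drt := hasDerivAt_pdt (hr.differentiable htop) x t
  have dzt := hasDerivAt_pdt (hz.differentiable htop) x t
  have dpx := hasDerivAt_pdx (hp.differentiable htop) x t
  have dqx := hasDerivAt_pdx (hq.differentiable htop) x t
  have drx := hasDerivAt_pdx (hr.differentiable htop) x t
  have dz := hasDerivAt_pdx (hz.differentiable htop) x t
  have dzx := hasDerivAt_pdx (hzx.differentiable htop) x t
  have de := ((((((dpt.pow 2).const_mul (1 / 2)).add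
    (((hasDerivAt_comp_pdt hγ hΘ x t).mul (dqt.pow 2)).const_mul (1 / 2))).add
    ((hasDerivAt_comp_pdt hh hΘ x t).mul (drt.mul dqt))).add
    ((drt.pow 2).const_mul (K / 2))).add ((dzt.pow 2).const_mul (1 / 2))).deriv
  have dF := ((dpx.mul (((hasDerivAt_comp_pdx hγ hΘ x t).mul dqx).add
    ((hasDerivAt_comp_pdx hh hΘ x t).mul drx))).add ((dz.mul dzx).const_mul D)).deriv
  have de' : pdt (energyDensity K γ h Θ w z) x t = _ := de
  have dF' : pdx (energyFlux D γ h Θ w z) x t = _ := dF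
  rw [de', dF', c1, c2]
  simp only [Pi.mul_apply, Pi.add_apply, Pi.pow_apply]
  push_cast
  ring

/-! ### Algebraic estimates -/

/-- Coercivity of the energy density: `H² / γ₀` is what Young's inequality needs to absorb the
cross term. -/
lemma density_coercive {g₀ H G B p q r z : ℝ} (hg₀ : 0 < g₀) (hG : g₀ ≤ G) (hB : |B| ≤ H) :
    min (1 / 2) (g₀ / 4) * (p ^ 2 + q ^ 2 + r ^ 2 + z ^ 2) ≤
      1 / 2 * p ^ 2 + 1 / 2 * (G * q ^ 2) + B * (r * q) + (2 * (H ^ 2 / g₀) + 1) / 2 * r ^ 2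
        + 1 / 2 * z ^ 2 := by
  have h1 : min (1 / 2) (g₀ / 4) ≤ 1 / 2 := min_le_left _ _
  have h2 : min (1 / 2) (g₀ / 4) ≤ g₀ / 4 := min_le_right _ _
  have hB2 : B ^ 2 ≤ H ^ 2 := sq_le_sq' (neg_le_of_abs_le hB) (le_of_abs_le hB)
  have hY : 0 ≤ g₀ / 4 * q ^ 2 + B * (r * q) + H ^ 2 / g₀ * r ^ 2 := by
    have e1 : g₀ / 4 * q ^ 2 + B * (r * q) + B ^ 2 / g₀ * r ^ 2
        = (g₀ / 2 * q + B * r) ^ 2 / g₀ := by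
      field_simp
      ring
    have e2 : B ^ 2 / g₀ * r ^ 2 ≤ H ^ 2 / g₀ * r ^ 2 := by gcongr
    have e3 : 0 ≤ (g₀ / 2 * q + B * r) ^ 2 / g₀ := by positivity
    linarith
  have hGq : g₀ * q ^ 2 ≤ G * q ^ 2 := by gcongr
  nlinarith [mul_le_mul_of_nonneg_right h1 (sq_nonneg p),
    mul_le_mul_of_nonneg_right h2 (sq_nonneg q), mul_le_mul_of_nonneg_right h1 (sq_nonneg r),
    mul_le_mul_of_nonneg_right h1 (sq_nonneg z)]

/-- The remainder is controlled by the energy: the product `w_tt z_x` is absorbed by the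
dissipation through Young's inequality, the rest is quadratic. -/
lemma remainder_le {D N p q r z y cy cz c1 c2 c3 c4 : ℝ} (hD : 0 < D) (hN : 0 ≤ N)
    (hcy : |cy| ≤ N) (hcz : |cz| ≤ N * |z|) (hc1 : |c1| ≤ N) (hc2 : |c2| ≤ N) (hc3 : |c3| ≤ N)
    (hc4 : |c4| ≤ N * |z|) :
    p * (cy * y + cz) + c1 * q ^ 2 + c2 * (r * q) + c3 * (z * q) + z * c4 - D * y ^ 2 ≤
      (N ^ 2 / (4 * D) + 3 * N) * (p ^ 2 + q ^ 2 + r ^ 2 + z ^ 2) := by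
  have hcy2 : cy ^ 2 ≤ N ^ 2 := sq_le_sq' (neg_le_of_abs_le hcy) (le_of_abs_le hcy)
  have h1 : p * (cy * y) - D * y ^ 2 ≤ N ^ 2 / (4 * D) * p ^ 2 := by
    have e1 : p * (cy * y) - D * y ^ 2
        = cy ^ 2 / (4 * D) * p ^ 2 - (2 * D * y - cy * p) ^ 2 / (4 * D) := by
      field_simp
      ring
    have e2 : cy ^ 2 / (4 * D) * p ^ 2 ≤ N ^ 2 / (4 * D) * p ^ 2 := by gcongr
    have e3 : 0 ≤ (2 * D * y - cy * p) ^ 2 / (4 * D) := by positivity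
    linarith
  have young : ∀ c s v : ℝ, |c| ≤ N → c * (s * v) ≤ N * (s ^ 2 + v ^ 2) := by
    intro c s v hc
    calc c * (s * v) ≤ |c * (s * v)| := le_abs_self _
      _ = |c| * (|s| * |v|) := by rw [abs_mul, abs_mul]
      _ ≤ N * (|s| * |v|) := by gcongr
      _ ≤ N * (s ^ 2 + v ^ 2) := by
        gcongr
        nlinarith [sq_nonneg (|s| - |v|), sq_abs s, sq_abs v, sq_nonneg s, sq_nonneg v]
  have h2 : p * cz ≤ N * (p ^ 2 + z ^ 2) := by
    calc p * cz ≤ |p * cz| := le_abs_self _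
      _ = |p| * |cz| := abs_mul _ _
      _ ≤ |p| * (N * |z|) := by gcongr
      _ = N * (|p| * |z|) := by ring
      _ ≤ N * (p ^ 2 + z ^ 2) := by
        gcongr
        nlinarith [sq_nonneg (|p| - |z|), sq_abs p, sq_abs z, sq_nonneg p, sq_nonneg z]
  have h3 : c1 * q ^ 2 ≤ N * q ^ 2 := by
    gcongr
    exact le_of_abs_le hc1
  have h4 := young c2 r q hc2
  have h5 := young c3 z q hc3
  have h6 : z * c4 ≤ N * z ^ 2 := by
    calc z * c4 ≤ |z * c4| := le_abs_self _
      _ = |z| * |c4| := abs_mul _ _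
      _ ≤ |z| * (N * |z|) := by gcongr
      _ = N * z ^ 2 := by rw [← sq_abs z]; ring
  have hM : 0 ≤ N ^ 2 / (4 * D) := by positivity
  nlinarith [mul_nonneg hM (sq_nonneg q), mul_nonneg hM (sq_nonneg r),
    mul_nonneg hM (sq_nonneg z), mul_nonneg hN (sq_nonneg p), mul_nonneg hN (sq_nonneg q),
    mul_nonneg hN (sq_nonneg r), mul_nonneg hN (sq_nonneg z)]

/-- A `C¹` function of one variable, composed with two continuous functions `Θ`, `Θ'`, is
Lipschitz in `Θ - Θ'` on a compact rectangle. -/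
lemma exists_comp_sub_le {g : ℝ → ℝ} (hg : ContDiff ℝ 1 g) {Θ Θ' : ℝ → ℝ → ℝ}
    (hΘ : Continuous (Function.uncurry Θ)) (hΘ' : Continuous (Function.uncurry Θ'))
    (a b c d : ℝ) :
    ∃ L, 0 ≤ L ∧ ∀ x ∈ Icc a b, ∀ t ∈ Icc c d,
      |g (Θ x t) - g (Θ' x t)| ≤ L * |Θ x t - Θ' x t| := by
  obtain ⟨R, -, hR⟩ := exists_abs_le hΘ a b c d
  obtain ⟨R', -, hR'⟩ := exists_abs_le hΘ' a b c d
  obtain ⟨L, hL⟩ := (hg.contDiffOn (s := Icc (-max R R') (max R R'))).exists_lipschitzOnWith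
    one_ne_zero (convex_Icc _ _) isCompact_Icc
  refine ⟨L, L.2, fun x hx t ht => ?_⟩
  have := hL.dist_le_mul (Θ x t)
    (abs_le.1 ((hR x hx t ht).trans (le_max_left _ _))) (Θ' x t)
    (abs_le.1 ((hR' x hx t ht).trans (le_max_right _ _)))
  simpa only [Real.dist_eq] using this

/-- The version of `exists_comp_sub_le` with a continuous prefactor. -/
lemma exists_comp_sub_mul_le {g : ℝ → ℝ} (hg : ContDiff ℝ 1 g) {Θ Θ' f : ℝ → ℝ → ℝ}
    (hΘ : Continuous (Function.uncurry Θ)) (hΘ' : Continuous (Function.uncurry Θ'))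
    (hf : Continuous (Function.uncurry f)) (a b c d : ℝ) :
    ∃ L, 0 ≤ L ∧ ∀ x ∈ Icc a b, ∀ t ∈ Icc c d,
      |(g (Θ x t) - g (Θ' x t)) * f x t| ≤ L * |Θ x t - Θ' x t| := by
  obtain ⟨L, hL0, hL⟩ := exists_comp_sub_le hg hΘ hΘ' a b c d
  obtain ⟨C, hC0, hC⟩ := exists_abs_le hf a b c d
  refine ⟨L * C, mul_nonneg hL0 hC0, fun x hx t ht => ?_⟩
  rw [abs_mul]
  calc |g (Θ x t) - g (Θ' x t)| * |f x t| ≤ (L * |Θ x t - Θ' x t|) * C :=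
        mul_le_mul (hL x hx t ht) (hC x hx t ht) (abs_nonneg _) (by positivity)
    _ = L * C * |Θ x t - Θ' x t| := by ring

/-! ### Uniqueness -/

lemma pdx_sub {f g : ℝ → ℝ → ℝ} (hf : ContDiff ℝ (⊤ : ℕ∞) (Function.uncurry f))
    (hg : ContDiff ℝ (⊤ : ℕ∞) (Function.uncurry g)) :
    pdx (fun x t => f x t - g x t) = fun x t => pdx f x t - pdx g x t := by
  ext x t
  exact ((hasDerivAt_pdx (hf.differentiable (by simp)) x t).sub
    (hasDerivAt_pdx (hg.differentiable (by simp)) x t)).deriv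

lemma pdt_sub {f g : ℝ → ℝ → ℝ} (hf : ContDiff ℝ (⊤ : ℕ∞) (Function.uncurry f))
    (hg : ContDiff ℝ (⊤ : ℕ∞) (Function.uncurry g)) :
    pdt (fun x t => f x t - g x t) = fun x t => pdt f x t - pdt g x t := by
  ext x t
  exact ((hasDerivAt_pdt (hf.differentiable (by simp)) x t).sub
    (hasDerivAt_pdt (hg.differentiable (by simp)) x t)).deriv

/-- Vanishing on the open interval passes to the `x`-derivative, with no information outside it. -/
lemma pdx_eq_zero_of_eq_zero {f : ℝ → ℝ → ℝ} {a b t x : ℝ} (hx : x ∈ Ioo a b)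
    (hf : ∀ y ∈ Ioo a b, f y t = 0) : pdx f x t = 0 := by
  have h : (fun y => f y t) =ᶠ[nhds x] fun _ => 0 := by
    filter_upwards [Ioo_mem_nhds hx.1 hx.2] with y hy using hf y hy
  have := h.deriv_eq
  simpa [pdx] using this

/-- Integration in time: `f_t = 0` on `[0,T]` and `f(x,0) = 0` force `f(x,·) = 0` on `[0,T]`. -/
lemma eq_zero_of_pdt_eq_zero {f : ℝ → ℝ → ℝ} (hf : ContDiff ℝ (⊤ : ℕ∞) (Function.uncurry f))
    {x T : ℝ} (h0 : f x 0 = 0) (h : ∀ t ∈ Icc 0 T, pdt f x t = 0) :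
    ∀ t ∈ Icc 0 T, f x t = 0 := by
  have hd := hasDerivAt_pdt (hf.differentiable (by simp)) x
  intro t ht
  rw [← h0]
  refine constant_of_has_deriv_right_zero (f := fun s => f x s) (a := 0) (b := T)
    (fun s _ => (hd s).continuousAt.continuousWithinAt) (fun s hs => ?_) t ht
  have := (hd s).hasDerivWithinAt (s := Ici s)
  rwa [h s (Ico_subset_Icc_self hs)] at this

/-- Uniqueness of classical solutions of the MGT–heat system. -/
theorem mgt_uniqueness (a b D α T : ℝ) (hab : a < b) (hD : 0 < D) (hα : 0 ≤ α) (hT : 0 < T)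
    (γ hγ Γ : ℝ → ℝ)
    (hγreg : ContDiff ℝ 2 γ) (hγpos : ∀ s : ℝ, 0 ≤ s → 0 < γ s)
    (hhreg : ContDiff ℝ 2 hγ) (hhpos : ∀ s : ℝ, 0 ≤ s → 0 < hγ s)
    (hΓreg : ContDiff ℝ 1 Γ) (hΓnn : ∀ s : ℝ, 0 ≤ s → 0 ≤ Γ s)
    (u Θ u' Θ' : ℝ → ℝ → ℝ)
    (hsol : IsMGTSolution a b D α T γ hγ Γ u Θ)
    (hsol' : IsMGTSolution a b D α T γ hγ Γ u' Θ')
    (hΘnn : ∀ x ∈ Icc a b, ∀ t ∈ Icc (0:ℝ) T, 0 ≤ Θ x t)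
    (hΘ'nn : ∀ x ∈ Icc a b, ∀ t ∈ Icc (0:ℝ) T, 0 ≤ Θ' x t)
    (hu0 : ∀ x ∈ Icc a b, u x 0 = u' x 0)
    (hut0 : ∀ x ∈ Icc a b, pdt u x 0 = pdt u' x 0)
    (hutt0 : ∀ x ∈ Icc a b, pdt (pdt u) x 0 = pdt (pdt u') x 0)
    (hΘ0 : ∀ x ∈ Icc a b, Θ x 0 = Θ' x 0) :
    ∀ x ∈ Icc a b, ∀ t ∈ Icc (0:ℝ) T, u x t = u' x t ∧ Θ x t = Θ' x t := by
  obtain ⟨hu, hΘ, hwave, hheat, hbd⟩ := hsol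
  obtain ⟨hu', hΘ', hwave', hheat', hbd'⟩ := hsol'
  have hut := contDiff_pdt (m := (⊤ : ℕ∞)) hu le_rfl
  have hut' := contDiff_pdt (m := (⊤ : ℕ∞)) hu' le_rfl
  have hutt := contDiff_pdt (m := (⊤ : ℕ∞)) hut le_rfl
  have hutt' := contDiff_pdt (m := (⊤ : ℕ∞)) hut' le_rfl
  have hux := contDiff_pdx (m := (⊤ : ℕ∞)) hu le_rfl
  have hux' := contDiff_pdx (m := (⊤ : ℕ∞)) hu' le_rfl
  have hutx := contDiff_pdx (m := (⊤ : ℕ∞)) hut le_rfl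
  have hutx' := contDiff_pdx (m := (⊤ : ℕ∞)) hut' le_rfl
  have huxx' := contDiff_pdx (m := (⊤ : ℕ∞)) hux' le_rfl
  have hutxx' := contDiff_pdx (m := (⊤ : ℕ∞)) hutx' le_rfl
  have hΘx := contDiff_pdx (m := (⊤ : ℕ∞)) hΘ le_rfl
  have hΘx' := contDiff_pdx (m := (⊤ : ℕ∞)) hΘ' le_rfl
  have hΘt := contDiff_pdt (m := (⊤ : ℕ∞)) hΘ le_rfl
  set w : ℝ → ℝ → ℝ := fun x t => u x t - u' x t with hw_def
  set z : ℝ → ℝ → ℝ := fun x t => Θ x t - Θ' x t with hz_def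
  have hw : ContDiff ℝ (⊤ : ℕ∞) (Function.uncurry w) := hu.sub hu'
  have hz : ContDiff ℝ (⊤ : ℕ∞) (Function.uncurry z) := hΘ.sub hΘ'
  have ewx : pdx w = fun x t => pdx u x t - pdx u' x t := pdx_sub hu hu'
  have ewt : pdt w = fun x t => pdt u x t - pdt u' x t := pdt_sub hu hu'
  have ewtt : pdt (pdt w) = fun x t => pdt (pdt u) x t - pdt (pdt u') x t := by
    rw [ewt]; exact pdt_sub hut hut'
  have ewttt : pdt (pdt (pdt w)) = fun x t => pdt (pdt (pdt u)) x t - pdt (pdt (pdt u')) x t := by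
    rw [ewtt]; exact pdt_sub hutt hutt'
  have ewtx : pdx (pdt w) = fun x t => pdx (pdt u) x t - pdx (pdt u') x t := by
    rw [ewt]; exact pdx_sub hut hut'
  have ewxx : pdx (pdx w) = fun x t => pdx (pdx u) x t - pdx (pdx u') x t := by
    rw [ewx]; exact pdx_sub hux hux'
  have ewtxx : pdx (pdx (pdt w))
      = fun x t => pdx (pdx (pdt u)) x t - pdx (pdx (pdt u')) x t := by
    rw [ewtx]; exact pdx_sub hutx hutx'
  have ezx : pdx z = fun x t => pdx Θ x t - pdx Θ' x t := pdx_sub hΘ hΘ'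
  have ezt : pdt z = fun x t => pdt Θ x t - pdt Θ' x t := pdt_sub hΘ hΘ'
  have ezxx : pdx (pdx z) = fun x t => pdx (pdx Θ) x t - pdx (pdx Θ') x t := by
    rw [ezx]; exact pdx_sub hΘx hΘx'
  have hdγ : ContDiff ℝ 1 (deriv γ) := hγreg.deriv'
  have hdh : ContDiff ℝ 1 (deriv hγ) := hhreg.deriv'
  have hnm : (Icc a b ×ˢ Icc (0:ℝ) T).Nonempty :=
    ⟨(a, 0), left_mem_Icc.2 hab.le, left_mem_Icc.2 hT.le⟩
  -- The positive lower bound of `γ(Θ)` and the upper bound of `|h(Θ)|` that fix the weight `K`.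
  obtain ⟨g₀, hg₀, hγlow⟩ : ∃ g₀ : ℝ, 0 < g₀ ∧
      ∀ x ∈ Icc a b, ∀ t ∈ Icc (0:ℝ) T, g₀ ≤ γ (Θ x t) := by
    obtain ⟨⟨x₀, t₀⟩, hm, hmin⟩ := ((isCompact_Icc (a := a) (b := b)).prod
      (isCompact_Icc (a := (0:ℝ)) (b := T))).exists_isMinOn hnm
      (hγreg.continuous.comp hΘ.continuous).continuousOn
    exact ⟨γ (Θ x₀ t₀), hγpos _ (hΘnn x₀ hm.1 t₀ hm.2), fun x hx t ht =>
      hmin (show (x, t) ∈ Icc a b ×ˢ Icc 0 T from ⟨hx, ht⟩)⟩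
  obtain ⟨H, -, hH⟩ := exists_abs_le (f := fun x t => hγ (Θ x t))
    (hhreg.continuous.comp hΘ.continuous) a b 0 T
  set K : ℝ := 2 * (H ^ 2 / g₀) + 1 with hK
  -- Bounds for the coefficients of the remainder.
  obtain ⟨N1, hN1, bN1⟩ := exists_abs_le
    (f := fun x t => deriv γ (Θ x t) * pdx (pdt u') x t + deriv hγ (Θ x t) * pdx u' x t)
    (((hdγ.continuous.comp hΘ.continuous).mul hutx'.continuous).add
      ((hdh.continuous.comp hΘ.continuous).mul hux'.continuous)) a b 0 T
  obtain ⟨N2, hN2, bN2⟩ := exists_abs_le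
    (f := fun x t => 1 / 2 * (deriv γ (Θ x t) * pdt Θ x t) + hγ (Θ x t))
    (((continuous_const (y := (1 / 2 : ℝ))).mul ((hdγ.continuous.comp hΘ.continuous).mul hΘt.continuous)).add
      (hhreg.continuous.comp hΘ.continuous)) a b 0 T
  obtain ⟨N3, hN3, bN3⟩ := exists_abs_le
    (f := fun x t => deriv hγ (Θ x t) * pdt Θ x t + K)
    (((hdh.continuous.comp hΘ.continuous).mul hΘt.continuous).add continuous_const) a b 0 T
  obtain ⟨N4, hN4, bN4⟩ := exists_abs_le
    (f := fun x t => Γ (Θ x t) * (pdx (pdt u) x t + pdx (pdt u') x t))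
    ((hΓreg.continuous.comp hΘ.continuous).mul (hutx.continuous.add hutx'.continuous)) a b 0 T
  obtain ⟨M1, hM1, bM1⟩ := exists_comp_sub_mul_le hdγ
    (f := fun x t => pdx Θ' x t * pdx (pdt u') x t) hΘ.continuous hΘ'.continuous
    (hΘx'.continuous.mul hutx'.continuous) a b 0 T
  obtain ⟨M2, hM2, bM2⟩ := exists_comp_sub_mul_le (hγreg.of_le one_le_two)
    hΘ.continuous hΘ'.continuous hutxx'.continuous a b 0 T
  obtain ⟨M3, hM3, bM3⟩ := exists_comp_sub_mul_le hdh
    (f := fun x t => pdx Θ' x t * pdx u' x t) hΘ.continuous hΘ'.continuous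
    (hΘx'.continuous.mul hux'.continuous) a b 0 T
  obtain ⟨M4, hM4, bM4⟩ := exists_comp_sub_mul_le (hhreg.of_le one_le_two)
    hΘ.continuous hΘ'.continuous huxx'.continuous a b 0 T
  obtain ⟨M5, hM5, bM5⟩ := exists_comp_sub_mul_le hΓreg
    (f := fun x t => pdx (pdt u') x t * pdx (pdt u') x t) hΘ.continuous hΘ'.continuous
    (hutx'.continuous.mul hutx'.continuous) a b 0 T
  set N : ℝ := N1 + N2 + N3 + N4 + (M1 + M2 + M3 + M4) + M5 with hN
  have hN0 : 0 ≤ N := by positivity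
  set m : ℝ := min (1 / 2) (g₀ / 4) with hm
  have hm0 : 0 < m := lt_min (by norm_num) (by positivity)
  have hcoer : ∀ x ∈ Icc a b, ∀ t ∈ Icc (0:ℝ) T,
      m * (pdt (pdt w) x t ^ 2 + pdx (pdt w) x t ^ 2 + pdx w x t ^ 2 + z x t ^ 2)
        ≤ energyDensity K γ hγ Θ w z x t := fun x hx t ht =>
    density_coercive hg₀ (hγlow x hx t ht) (hH x hx t ht)
  -- `u_x` vanishes at the end points for all times, hence so does `u_xt`.
  have flux_boundary : ∀ c t : ℝ, pdx z c t = 0 → (∀ᶠ s in nhds t, pdx w c s = 0) →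
      energyFlux D γ hγ Θ w z c t = 0 := by
    intro c t h1 h2
    have h3 : pdx (pdt w) c t = 0 := by
      rw [pdx_pdt_comm hw]
      exact (Filter.EventuallyEq.deriv_eq (f := fun _ => (0 : ℝ)) h2).trans (deriv_const _ _)
    simp [energyFlux, h1, h2.self_of_nhds, h3]
  have hzero := eq_zero_of_density_le (T := T) (C := (N ^ 2 / (4 * D) + 3 * N) / m) hab
    (contDiff_energyDensity K hγreg hhreg hΘ hw hz)
    (contDiff_energyFlux D hγreg hhreg hΘ hw hz) ?_ ?_ ?_ ?_ ?_
  · have hkey : ∀ x ∈ Icc a b, ∀ t ∈ Icc (0:ℝ) T, pdt (pdt w) x t = 0 ∧ z x t = 0 := by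
      intro x hx t ht
      have h1 := hcoer x hx t ht
      rw [hzero x hx t ht] at h1
      have h2 : pdt (pdt w) x t ^ 2 + pdx (pdt w) x t ^ 2 + pdx w x t ^ 2 + z x t ^ 2 ≤ 0 :=
        nonpos_of_mul_nonpos_right h1 hm0
      constructor <;> refine pow_eq_zero_iff two_ne_zero |>.1 (le_antisymm ?_ (sq_nonneg _)) <;>
        linarith [sq_nonneg (pdt (pdt w) x t), sq_nonneg (pdx (pdt w) x t),
          sq_nonneg (pdx w x t), sq_nonneg (z x t)]
    intro x hx t ht
    have hwt : ∀ t ∈ Icc 0 T, pdt w x t = 0 :=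
      eq_zero_of_pdt_eq_zero (contDiff_pdt (m := (⊤ : ℕ∞)) hw le_rfl)
        (by rw [ewt]; exact sub_eq_zero.2 (hut0 x hx)) (fun t ht => (hkey x hx t ht).1)
    exact ⟨sub_eq_zero.1 (eq_zero_of_pdt_eq_zero hw (sub_eq_zero.2 (hu0 x hx)) hwt t ht),
      sub_eq_zero.1 (hkey x hx t ht).2⟩
  · intro t ht
    exact flux_boundary a t (by rw [ezx]; simp [(hbd t ht).2.2.1, (hbd' t ht).2.2.1])
      (by filter_upwards [Ioo_mem_nhds ht.1 ht.2] with s hs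
          rw [ewx]; simp [(hbd s hs).1, (hbd' s hs).1])
  · intro t ht
    exact flux_boundary b t (by rw [ezx]; simp [(hbd t ht).2.2.2, (hbd' t ht).2.2.2])
      (by filter_upwards [Ioo_mem_nhds ht.1 ht.2] with s hs
          rw [ewx]; simp [(hbd s hs).2.1, (hbd' s hs).2.1])
  · intro x hx t ht
    have hx' := Ioo_subset_Icc_self hx
    have ht' := Ioo_subset_Icc_self ht
    have hw1 := hwave x hx t ht
    have hw2 := hwave' x hx t ht
    rw [pdx_comp_mul hγreg hΘ hutx, pdx_comp_mul hhreg hΘ hux] at hw1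
    rw [pdx_comp_mul hγreg hΘ' hutx', pdx_comp_mul hhreg hΘ' hux'] at hw2
    have hh1 := hheat x hx t ht
    have hh2 := hheat' x hx t ht
    have hcz : |(deriv γ (Θ x t) - deriv γ (Θ' x t)) * (pdx Θ' x t * pdx (pdt u') x t)
        + (γ (Θ x t) - γ (Θ' x t)) * pdx (pdx (pdt u')) x t
        + (deriv hγ (Θ x t) - deriv hγ (Θ' x t)) * (pdx Θ' x t * pdx u' x t)
        + (hγ (Θ x t) - hγ (Θ' x t)) * pdx (pdx u') x t| ≤ N * |z x t| := by
      have hle : (M1 + M2 + M3 + M4) * |z x t| ≤ N * |z x t| := by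
        gcongr
        linarith
      refine le_trans ?_ hle
      refine (abs_add_le _ _).trans ?_
      have e1 := abs_add_le
        ((deriv γ (Θ x t) - deriv γ (Θ' x t)) * (pdx Θ' x t * pdx (pdt u') x t)
          + (γ (Θ x t) - γ (Θ' x t)) * pdx (pdx (pdt u')) x t)
        ((deriv hγ (Θ x t) - deriv hγ (Θ' x t)) * (pdx Θ' x t * pdx u' x t))
      have e2 := abs_add_le
        ((deriv γ (Θ x t) - deriv γ (Θ' x t)) * (pdx Θ' x t * pdx (pdt u') x t))
        ((γ (Θ x t) - γ (Θ' x t)) * pdx (pdx (pdt u')) x t)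
      have f1 := bM1 x hx' t ht'
      have f2 := bM2 x hx' t ht'
      have f3 := bM3 x hx' t ht'
      have f4 := bM4 x hx' t ht'
      have : (M1 + M2 + M3 + M4) * |z x t| = M1 * |Θ x t - Θ' x t| + M2 * |Θ x t - Θ' x t|
          + M3 * |Θ x t - Θ' x t| + M4 * |Θ x t - Θ' x t| := by
        simp only [hz_def]
        ring
      linarith
    have hc4 : |(Γ (Θ x t) - Γ (Θ' x t)) * (pdx (pdt u') x t * pdx (pdt u') x t)| ≤ N * |z x t| := by
      refine (bM5 x hx' t ht').trans ?_
      gcongr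
      linarith
    have hrem := remainder_le (p := pdt (pdt w) x t) (q := pdx (pdt w) x t) (r := pdx w x t)
      (z := z x t) (y := pdx z x t) hD hN0
      ((bN1 x hx' t ht').trans (by linarith)) hcz ((bN2 x hx' t ht').trans (by linarith))
      ((bN3 x hx' t ht').trans (by linarith)) ((bN4 x hx' t ht').trans (by linarith)) hc4
    have hαp : 0 ≤ α * pdt (pdt w) x t ^ 2 := by positivity
    have hM : 0 ≤ N ^ 2 / (4 * D) + 3 * N := by positivity
    have hfin : (N ^ 2 / (4 * D) + 3 * N) *
        (pdt (pdt w) x t ^ 2 + pdx (pdt w) x t ^ 2 + pdx w x t ^ 2 + z x t ^ 2)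
        ≤ (N ^ 2 / (4 * D) + 3 * N) / m * energyDensity K γ hγ Θ w z x t := by
      rw [div_mul_eq_mul_div, le_div_iff₀ hm0, mul_assoc, mul_comm _ m]
      exact mul_le_mul_of_nonneg_left (hcoer x hx' t ht') hM
    rw [pdt_energyDensity K D hγreg hhreg hΘ hw hz x t]
    refine le_trans (le_of_eq ?_) (add_le_add_right (((sub_le_self _ hαp).trans hrem).trans hfin) _)
    rw [ewttt, ewtxx, ewxx, ezxx, ewtt, ewtx, ewx, ezx, ezt]
    simp only [hz_def]
    linear_combination (pdt (pdt u) x t - pdt (pdt u') x t) * (hw1 - hw2)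
      + (Θ x t - Θ' x t) * (hh1 - hh2)
  · intro x hx t ht
    exact le_trans (by positivity) (hcoer x hx t ht)
  · intro x hx
    have h1 : pdx w x 0 = 0 := pdx_eq_zero_of_eq_zero hx fun y hy =>
      sub_eq_zero.2 (hu0 y (Ioo_subset_Icc_self hy))
    have h2 : pdx (pdt w) x 0 = 0 := pdx_eq_zero_of_eq_zero hx fun y hy => by
      rw [ewt]
      exact sub_eq_zero.2 (hut0 y (Ioo_subset_Icc_self hy))
    have h3 : pdt (pdt w) x 0 = 0 := by
      rw [ewtt]
      exact sub_eq_zero.2 (hutt0 x (Ioo_subset_Icc_self hx))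
    have h4 : z x 0 = 0 := sub_eq_zero.2 (hΘ0 x (Ioo_subset_Icc_self hx))
    simp [energyDensity, h1, h2, h3, h4]
end

section
/- Let Ω = (a,b) ⊂ ℝ be a bounded open interval with a < b, let ε > 0 and T > 0, and let u, v be real-valued C^∞ functions on [a,b] × [0,T] such that u_t = ε u_xx + v in Ω × (0,T) and u_x(a,t) = u_x(b,t) = v_x(a,t) = v_x(b,t) = 0 for all t ∈ (0,T). Then for every t ∈ (0,T), the function t ↦ (1/2)∫_a^b u_xx²(x,t) dx is differentiable and (1/2) d/dt ∫_a^b u_xx² dx + ε ∫_a^b u_xxx² dx ≤ (1/2) ∫_a^b u_xx² dx + (1/2) ∫_a^b v_xx² dx. -/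
/-!
Write `U = u_xx`. Differentiating under the integral sign (all functions are smooth and the domain
is compact) gives `(1/2) d/dt ∫ U² = ∫ U U_t`, and since partial derivatives commute, `U_t` is the
second space derivative of `u_t = ε u_xx + v`, so that `U_t = ε u_xxxx + v_xx` on `[a, b]`.

Differentiating the equation once in space and passing to the boundary gives
`u_xt = ε u_xxx + v_x` at `x = a, b`. There `u_xt = 0`, because `u_x` vanishes on the boundary at all
times, and `v_x = 0`; hence `u_xxx = 0` on the boundary. Integrating by parts,
`∫ U u_xxxx = - ∫ u_xxx²` without boundary terms, so `(1/2) d/dt ∫ U² + ε ∫ u_xxx² = ∫ U v_xx`,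
and `U v_xx ≤ U² / 2 + v_xx² / 2` concludes.
-/

open MeasureTheory Set

open Topology

/-- Joint smoothness of a function of `(x, t)` on the whole plane. -/
def JointSmooth (f : ℝ → ℝ → ℝ) : Prop := ContDiff ℝ (⊤ : ℕ∞) (Function.uncurry f)

namespace JointSmooth

variable {f g : ℝ → ℝ → ℝ}

lemma hasFDerivAt (hf : JointSmooth f) (p : ℝ × ℝ) :
    HasFDerivAt (Function.uncurry f) (fderiv ℝ (Function.uncurry f) p) p :=
  (ContDiff.differentiable hf (by simp) p).hasFDerivAt

lemma pdx_eq (hf : JointSmooth f) (x t : ℝ) :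
    HasDerivAt (fun y => f y t) (fderiv ℝ (Function.uncurry f) (x, t) (1, 0)) x :=
  (hf.hasFDerivAt (x, t)).comp_hasDerivAt x (f := fun y => (y, t))
    ((hasDerivAt_id x).prodMk (hasDerivAt_const x t))

lemma pdt_eq (hf : JointSmooth f) (x t : ℝ) :
    HasDerivAt (fun s => f x s) (fderiv ℝ (Function.uncurry f) (x, t) (0, 1)) t :=
  (hf.hasFDerivAt (x, t)).comp_hasDerivAt t (f := fun s => (x, s))
    ((hasDerivAt_const t x).prodMk (hasDerivAt_id t))

lemma uncurry_pdx (hf : JointSmooth f) :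
    Function.uncurry (pdx f) = fun p => fderiv ℝ (Function.uncurry f) p (1, 0) :=
  funext fun p => (hf.pdx_eq p.1 p.2).deriv

lemma uncurry_pdt (hf : JointSmooth f) :
    Function.uncurry (pdt f) = fun p => fderiv ℝ (Function.uncurry f) p (0, 1) :=
  funext fun p => (hf.pdt_eq p.1 p.2).deriv

lemma hasDerivAt_x (hf : JointSmooth f) (x t : ℝ) : HasDerivAt (fun y => f y t) (pdx f x t) x :=
  (hf.pdx_eq x t).differentiableAt.hasDerivAt

lemma hasDerivAt_t (hf : JointSmooth f) (x t : ℝ) : HasDerivAt (fun s => f x s) (pdt f x t) t :=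
  (hf.pdt_eq x t).differentiableAt.hasDerivAt

lemma smooth_fderiv (hf : JointSmooth f) :
    ContDiff ℝ (⊤ : ℕ∞) (fderiv ℝ (Function.uncurry f)) :=
  ContDiff.fderiv_right hf (by simp)

lemma smooth_pdx (hf : JointSmooth f) : JointSmooth (pdx f) := by
  rw [JointSmooth, hf.uncurry_pdx]
  exact hf.smooth_fderiv.clm_apply contDiff_const

lemma smooth_pdt (hf : JointSmooth f) : JointSmooth (pdt f) := by
  rw [JointSmooth, hf.uncurry_pdt]
  exact hf.smooth_fderiv.clm_apply contDiff_const

lemma cont (hf : JointSmooth f) : Continuous (Function.uncurry f) := ContDiff.continuous hf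

lemma cont_x (hf : JointSmooth f) (t : ℝ) : Continuous (fun x => f x t) :=
  hf.cont.comp (f := fun x => (x, t)) (by fun_prop)

/-- Mixed partial derivatives commute, by symmetry of the second Fréchet derivative. -/
lemma pdt_pdx (hf : JointSmooth f) : pdt (pdx f) = pdx (pdt f) := by
  funext x t
  have hd : DifferentiableAt ℝ (fderiv ℝ (Function.uncurry f)) (x, t) :=
    hf.smooth_fderiv.differentiable (by simp) _
  have h1 : pdt (pdx f) x t
      = fderiv ℝ (fderiv ℝ (Function.uncurry f)) (x, t) (0, 1) (1, 0) := by
    refine ((hf.smooth_pdx.pdt_eq x t).deriv).trans ?_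
    rw [hf.uncurry_pdx, fderiv_clm_apply hd (differentiableAt_const _)]
    simp
  have h2 : pdx (pdt f) x t
      = fderiv ℝ (fderiv ℝ (Function.uncurry f)) (x, t) (1, 0) (0, 1) := by
    refine ((hf.smooth_pdt.pdx_eq x t).deriv).trans ?_
    rw [hf.uncurry_pdt, fderiv_clm_apply hd (differentiableAt_const _)]
    simp
  rw [h1, h2]
  have hs : ContDiff ℝ (⊤ : ℕ∞) (Function.uncurry f) := hf
  exact (hs.contDiffAt (x := (x, t))).isSymmSndFDerivAt
    (by simpa using WithTop.coe_le_coe.2 (le_top : (2 : ℕ∞) ≤ ⊤)) _ _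

/-- An identity between smooth functions on the open interval may be differentiated in space, and
the resulting identity extends to the boundary by continuity. -/
lemma pdx_eqOn_Icc (hf : JointSmooth f) (hg : JointSmooth g) {a b t : ℝ} (hab : a < b)
    (h : ∀ x ∈ Ioo a b, f x t = g x t) : ∀ x ∈ Icc a b, pdx f x t = pdx g x t := by
  have h1 : EqOn (fun x => pdx f x t) (fun x => pdx g x t) (Ioo a b) := fun x hx =>
    Filter.EventuallyEq.deriv_eq (Filter.eventually_of_mem (isOpen_Ioo.mem_nhds hx) h)
  have h2 := h1.closure (hf.smooth_pdx.cont_x t) (hg.smooth_pdx.cont_x t)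
  rw [closure_Ioo hab.ne] at h2
  exact h2

/-- Differentiation of `∫ f²` under the integral sign. -/
lemma hasDerivAt_half_integral_sq (hf : JointSmooth f) (a b t : ℝ) :
    HasDerivAt (fun s => (1/2 : ℝ) * ∫ x in a..b, (f x s) ^ 2)
      (∫ x in a..b, f x t * pdt f x t) t := by
  have hc : Continuous (fun p : ℝ × ℝ => 2 * (f p.1 p.2 * pdt f p.1 p.2)) :=
    continuous_const.mul (hf.cont.mul hf.smooth_pdt.cont)
  obtain ⟨C, hC⟩ := (isCompact_uIcc (a := a) (b := b)).prod
    (isCompact_Icc (a := t - 1) (b := t + 1)) |>.exists_bound_of_continuousOn hc.continuousOn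
  have key := (intervalIntegral.hasDerivAt_integral_of_dominated_loc_of_deriv_le
    (μ := volume) (a := a) (b := b) (bound := fun _ => C) (F := fun s x => (f x s) ^ 2)
    (F' := fun s x => 2 * (f x s * pdt f x s)) (x₀ := t) (s := Icc (t - 1) (t + 1))
    (Icc_mem_nhds (by linarith) (by linarith))
    (Filter.Eventually.of_forall fun s => ((hf.cont_x s).pow 2).aestronglyMeasurable)
    (((hf.cont_x t).pow 2).intervalIntegrable _ _)
    (continuous_const.mul ((hf.cont_x t).mul (hf.smooth_pdt.cont_x t))).aestronglyMeasurable
    (Filter.Eventually.of_forall fun x hx s hs => hC (x, s) ⟨uIoc_subset_uIcc hx, hs⟩)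
    intervalIntegrable_const
    (Filter.Eventually.of_forall fun x _ s _ => by
      refine ((hf.hasDerivAt_t x s).pow 2).congr_deriv ?_
      push_cast
      ring)).2
  refine (key.const_mul (1/2 : ℝ)).congr_deriv ?_
  rw [intervalIntegral.integral_const_mul]
  ring

end JointSmooth

/-- If `u_t = ε u_xx + v` with Neumann boundary conditions for `u` and `v`, then
`(1/2) d/dt ∫ u_xx² + ε ∫ u_xxx² ≤ (1/2) ∫ u_xx² + (1/2) ∫ v_xx²`. -/
theorem energy_uxx_evolution (a b ε T : ℝ) (hab : a < b) (hε : 0 < ε) (hT : 0 < T)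
    (u v : ℝ → ℝ → ℝ)
    (hu : ContDiff ℝ (⊤ : ℕ∞) (Function.uncurry u)) (hv : ContDiff ℝ (⊤ : ℕ∞) (Function.uncurry v))
    (heq : ∀ x ∈ Ioo a b, ∀ t ∈ Ioo (0:ℝ) T, pdt u x t = ε * pdx (pdx u) x t + v x t)
    (hbc : ∀ t ∈ Ioo (0:ℝ) T,
      pdx u a t = 0 ∧ pdx u b t = 0 ∧ pdx v a t = 0 ∧ pdx v b t = 0) :
    ∀ t ∈ Ioo (0:ℝ) T, ∃ y' : ℝ,
      HasDerivAt (fun s => (1/2 : ℝ) * ∫ x in a..b, (pdx (pdx u) x s) ^ 2) y' t ∧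
      y' + ε * (∫ x in a..b, (pdx (pdx (pdx u)) x t) ^ 2)
        ≤ (1/2 : ℝ) * (∫ x in a..b, (pdx (pdx u) x t) ^ 2)
          + (1/2 : ℝ) * (∫ x in a..b, (pdx (pdx v) x t) ^ 2) := by
  intro t ht
  have hU : JointSmooth u := hu
  have hV : JointSmooth v := hv
  have hU1 := hU.smooth_pdx
  have hU2 := hU1.smooth_pdx
  have hU3 := hU2.smooth_pdx
  have hU4 := hU3.smooth_pdx
  have hV1 := hV.smooth_pdx
  have hV2 := hV1.smooth_pdx
  -- The right-hand side of the equation and its space derivatives.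
  have hG : JointSmooth (fun x t => ε * pdx (pdx u) x t + v x t) :=
    ContDiff.add (contDiff_const.mul hU2) hV
  have hG1 : pdx (fun x t => ε * pdx (pdx u) x t + v x t)
      = fun x t => ε * pdx (pdx (pdx u)) x t + pdx v x t := by
    funext x s
    exact (((hU2.hasDerivAt_x x s).const_mul ε).add (hV.hasDerivAt_x x s)).deriv
  have hG2 : pdx (fun x t => ε * pdx (pdx (pdx u)) x t + pdx v x t)
      = fun x t => ε * pdx (pdx (pdx (pdx u))) x t + pdx (pdx v) x t := by
    funext x s
    exact (((hU3.hasDerivAt_x x s).const_mul ε).add (hV1.hasDerivAt_x x s)).deriv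
  have e1 : ∀ x ∈ Icc a b, pdx (pdt u) x t = ε * pdx (pdx (pdx u)) x t + pdx v x t := by
    have := hU.smooth_pdt.pdx_eqOn_Icc hG hab (fun x hx => heq x hx t ht)
    rwa [hG1] at this
  have e2 : ∀ x ∈ Icc a b,
      pdt (pdx (pdx u)) x t = ε * pdx (pdx (pdx (pdx u))) x t + pdx (pdx v) x t := by
    have := hU.smooth_pdt.smooth_pdx.pdx_eqOn_Icc (hG1 ▸ hG.smooth_pdx) hab
      (fun x hx => e1 x (Ioo_subset_Icc_self hx))
    rw [hG2] at this
    rwa [hU1.pdt_pdx, hU.pdt_pdx]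
  -- `u_x = 0` at a boundary point for all times forces `u_xt = 0`, hence `u_xxx = 0`, there.
  have bdry : ∀ c ∈ Icc a b, (∀ s ∈ Ioo (0:ℝ) T, pdx u c s = 0) → pdx v c t = 0 →
      pdx (pdx (pdx u)) c t = 0 := by
    intro c hc h0 hv0
    have h1 : pdt (pdx u) c t = 0 := by
      have : (fun s => pdx u c s) =ᶠ[𝓝 t] fun _ => (0:ℝ) :=
        Filter.eventually_of_mem (isOpen_Ioo.mem_nhds ht) h0
      exact this.deriv_eq.trans (deriv_const t 0)
    have h2 := e1 c hc
    rw [← hU.pdt_pdx, h1, hv0, add_zero] at h2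
    exact (mul_eq_zero.mp h2.symm).resolve_left hε.ne'
  have ha := bdry a (left_mem_Icc.2 hab.le) (fun s hs => (hbc s hs).1) (hbc t ht).2.2.1
  have hb := bdry b (right_mem_Icc.2 hab.le) (fun s hs => (hbc s hs).2.1) (hbc t ht).2.2.2
  refine ⟨_, hU2.hasDerivAt_half_integral_sq a b t, ?_⟩
  have c2 := hU2.cont_x t
  have c3 := hU3.cont_x t
  have c4 := hU4.cont_x t
  have d2 := hV2.cont_x t
  have k24 : Continuous fun x => ε * (pdx (pdx u) x t * pdx (pdx (pdx (pdx u))) x t) := by fun_prop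
  have kuv : Continuous fun x => pdx (pdx u) x t * pdx (pdx v) x t := by fun_prop
  have kuu : Continuous fun x => (1/2 : ℝ) * (pdx (pdx u) x t) ^ 2 := by fun_prop
  have kvv : Continuous fun x => (1/2 : ℝ) * (pdx (pdx v) x t) ^ 2 := by fun_prop
  have parts : ∫ x in a..b, pdx (pdx u) x t * pdx (pdx (pdx (pdx u))) x t
      = - ∫ x in a..b, (pdx (pdx (pdx u)) x t) ^ 2 := by
    rw [intervalIntegral.integral_mul_deriv_eq_deriv_mul
      (fun x _ => hU2.hasDerivAt_x x t) (fun x _ => hU3.hasDerivAt_x x t)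
      (c3.intervalIntegrable _ _) (c4.intervalIntegrable _ _), ha, hb]
    simp [pow_two]
  have split : ∫ x in a..b, pdx (pdx u) x t * pdt (pdx (pdx u)) x t
      = ε * (∫ x in a..b, pdx (pdx u) x t * pdx (pdx (pdx (pdx u))) x t)
        + ∫ x in a..b, pdx (pdx u) x t * pdx (pdx v) x t := by
    rw [← intervalIntegral.integral_const_mul, ← intervalIntegral.integral_add
      (k24.intervalIntegrable _ _) (kuv.intervalIntegrable _ _)]
    refine intervalIntegral.integral_congr fun x hx => ?_
    rw [uIcc_of_le hab.le] at hx
    simp only [e2 x hx]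
    ring
  have young : ∫ x in a..b, pdx (pdx u) x t * pdx (pdx v) x t
      ≤ (1/2 : ℝ) * (∫ x in a..b, (pdx (pdx u) x t) ^ 2)
          + (1/2 : ℝ) * (∫ x in a..b, (pdx (pdx v) x t) ^ 2) := by
    rw [← intervalIntegral.integral_const_mul, ← intervalIntegral.integral_const_mul,
      ← intervalIntegral.integral_add
      (kuu.intervalIntegrable _ _) (kvv.intervalIntegrable _ _)]
    refine intervalIntegral.integral_mono_on hab.le (kuv.intervalIntegrable _ _)
      ((kuu.add kvv).intervalIntegrable _ _) fun x _ => ?_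
    nlinarith [sq_nonneg (pdx (pdx u) x t - pdx (pdx v) x t)]
  rw [split, parts]
  linarith
end

section
/- Let Ω = (a,b) ⊂ ℝ be a bounded open interval with a < b, let ε ∈ (0,1), let k₁, k₂, k₃, k₄ > 0, and let g, h : [a,b] → ℝ be continuous with k₁ ≤ g ≤ k₂ and k₃ ≤ h ≤ k₄ on [a,b]. Let w ∈ C¹([a,b]), v ∈ C²([a,b]) and u ∈ C³([a,b]). Set B := 4k₄²/k₁, k₁₂ := max{2, 4/k₁, 4/B, 1/k₃}, and y := (1/2)∫_a^b (w')² + (1/2)∫_a^b g (v'')² + ∫_a^b h u'' v'' + (B/2)∫_a^b (u'')² + ε ∫_a^b h (u''')². Then k₁₂ · y ≥ ∫_a^b (w')² + ∫_a^b (v'')² + ∫_a^b (u'')² + ε ∫_a^b (u''')². -/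
/-!
The cross term is absorbed by completing the square: since `h² ≤ k₄² = B k₁ / 4`,
`h q p + (k₁ / 4) p² + (B / 4) q² ≥ (k₁ p / 2 + h q)² / k₁ ≥ 0` with `p = v''`, `q = u''`.
Together with `g ≥ k₁` and `h ≥ k₃`, integration gives
`y ≥ (1/2) ∫ (w')² + (k₁/4) ∫ (v'')² + (B/4) ∫ (u'')² + ε k₃ ∫ (u''')²`,
and `k₁₂` is at least the reciprocal of each of the four coefficients.
-/

open MeasureTheory Set

/-- Young's inequality with the weights that leave half of each diagonal term. -/
lemma cross_term_nonneg {k₁ k₃ k₄ B t p q : ℝ} (hk₁ : 0 < k₁) (hk₃ : 0 < k₃)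
    (hB : B = 4 * k₄ ^ 2 / k₁) (ht : k₃ ≤ t ∧ t ≤ k₄) :
    0 ≤ t * q * p + k₁ / 4 * p ^ 2 + B / 4 * q ^ 2 := by
  have ht2 : t ^ 2 ≤ k₄ ^ 2 := pow_le_pow_left₀ (hk₃.le.trans ht.1) ht.2 2
  have key : t * q * p + k₁ / 4 * p ^ 2 + B / 4 * q ^ 2
      = ((k₁ / 2 * p + t * q) ^ 2 + (k₄ ^ 2 - t ^ 2) * q ^ 2) / k₁ := by
    rw [hB]
    field_simp
    ring
  rw [key]
  have := mul_nonneg (sub_nonneg.2 ht2) (sq_nonneg q)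
  positivity

/-- Lower bound for the energy functional `y` (Lemma 3.6 of the paper),
stated at a fixed time in terms of spatial functions. -/
theorem energy_lower_bound (a b ε : ℝ) (hab : a < b) (hε : ε ∈ Ioo (0:ℝ) 1)
    (k₁ k₂ k₃ k₄ : ℝ) (hk₁ : 0 < k₁) (hk₂ : 0 < k₂) (hk₃ : 0 < k₃) (hk₄ : 0 < k₄)
    (g h : ℝ → ℝ) (hg : ContinuousOn g (Icc a b)) (hh : ContinuousOn h (Icc a b))
    (hgb : ∀ x ∈ Icc a b, k₁ ≤ g x ∧ g x ≤ k₂)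
    (hhb : ∀ x ∈ Icc a b, k₃ ≤ h x ∧ h x ≤ k₄)
    (w v u : ℝ → ℝ) (hw : ContDiff ℝ 1 w) (hv : ContDiff ℝ 2 v) (hu : ContDiff ℝ 3 u)
    (B k₁₂ y : ℝ)
    (hB : B = 4 * k₄ ^ 2 / k₁)
    (hk₁₂ : k₁₂ = max (max 2 (4 / k₁)) (max (4 / B) (1 / k₃)))
    (hy : y = (1/2 : ℝ) * (∫ x in a..b, (deriv w x) ^ 2)
        + (1/2 : ℝ) * (∫ x in a..b, g x * (deriv (deriv v) x) ^ 2)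
        + (∫ x in a..b, h x * deriv (deriv u) x * deriv (deriv v) x)
        + (B / 2) * (∫ x in a..b, (deriv (deriv u) x) ^ 2)
        + ε * (∫ x in a..b, h x * (deriv (deriv (deriv u)) x) ^ 2)) :
    k₁₂ * y ≥ (∫ x in a..b, (deriv w x) ^ 2) + (∫ x in a..b, (deriv (deriv v) x) ^ 2)
        + (∫ x in a..b, (deriv (deriv u) x) ^ 2)
        + ε * (∫ x in a..b, (deriv (deriv (deriv u)) x) ^ 2) := by
  have iter2 : ∀ f : ℝ → ℝ, deriv (deriv f) = iteratedDeriv 2 f := fun f => by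
    simp [iteratedDeriv_succ]
  have iter3 : ∀ f : ℝ → ℝ, deriv (deriv (deriv f)) = iteratedDeriv 3 f := fun f => by
    simp [iteratedDeriv_succ]
  have cp : Continuous (deriv (deriv v)) := by
    rw [iter2]; exact hv.continuous_iteratedDeriv 2 le_rfl
  have cq : Continuous (deriv (deriv u)) := by
    rw [iter2]; exact hu.continuous_iteratedDeriv 2 (by norm_num)
  have cr : Continuous (deriv (deriv (deriv u))) := by
    rw [iter3]; exact hu.continuous_iteratedDeriv 3 le_rfl
  generalize deriv (deriv (deriv u)) = r at *
  generalize deriv (deriv u) = q at *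
  generalize deriv (deriv v) = p at *
  have hI : uIcc a b = Icc a b := uIcc_of_le hab.le
  have ip : IntervalIntegrable (fun x => p x ^ 2) volume a b := (cp.pow 2).intervalIntegrable a b
  have iq : IntervalIntegrable (fun x => q x ^ 2) volume a b := (cq.pow 2).intervalIntegrable a b
  have ir : IntervalIntegrable (fun x => r x ^ 2) volume a b := (cr.pow 2).intervalIntegrable a b
  have igp : IntervalIntegrable (fun x => g x * p x ^ 2) volume a b :=
    ContinuousOn.intervalIntegrable (hI ▸ hg.mul (cp.pow 2).continuousOn)
  have ihqp : IntervalIntegrable (fun x => h x * q x * p x) volume a b :=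
    ContinuousOn.intervalIntegrable (hI ▸ (hh.mul cq.continuousOn).mul cp.continuousOn)
  have ihr : IntervalIntegrable (fun x => h x * r x ^ 2) volume a b :=
    ContinuousOn.intervalIntegrable (hI ▸ hh.mul (cr.pow 2).continuousOn)
  have hG : k₁ * (∫ x in a..b, p x ^ 2) ≤ ∫ x in a..b, g x * p x ^ 2 := by
    rw [← intervalIntegral.integral_const_mul]
    exact intervalIntegral.integral_mono_on hab.le (ip.const_mul k₁) igp
      fun x hx => mul_le_mul_of_nonneg_right (hgb x hx).1 (sq_nonneg _)
  have hK : k₃ * (∫ x in a..b, r x ^ 2) ≤ ∫ x in a..b, h x * r x ^ 2 := by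
    rw [← intervalIntegral.integral_const_mul]
    exact intervalIntegral.integral_mono_on hab.le (ir.const_mul k₃) ihr
      fun x hx => mul_le_mul_of_nonneg_right (hhb x hx).1 (sq_nonneg _)
  have hH : 0 ≤ (∫ x in a..b, h x * q x * p x) + k₁ / 4 * (∫ x in a..b, p x ^ 2)
      + B / 4 * (∫ x in a..b, q x ^ 2) := by
    rw [← intervalIntegral.integral_const_mul, ← intervalIntegral.integral_const_mul,
      ← intervalIntegral.integral_add ihqp (ip.const_mul _),
      ← intervalIntegral.integral_add (ihqp.add (ip.const_mul _)) (iq.const_mul _)]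
    exact intervalIntegral.integral_nonneg hab.le
      fun x hx => cross_term_nonneg hk₁ hk₃ hB (hhb x hx)
  have nn : ∀ f : ℝ → ℝ, 0 ≤ ∫ x in a..b, f x ^ 2 := fun f =>
    intervalIntegral.integral_nonneg hab.le fun x _ => sq_nonneg _
  have nW := nn (deriv w)
  have nP := nn p
  have nQ := nn q
  have nR := mul_nonneg hε.1.le (nn r)
  have hKε := mul_le_mul_of_nonneg_left hK hε.1.le
  have hB0 : 0 < B := by rw [hB]; positivity
  have m1 : 2 ≤ k₁₂ := by rw [hk₁₂]; simp
  have m2 : 4 / k₁ ≤ k₁₂ := by rw [hk₁₂]; simp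
  have m3 : 4 / B ≤ k₁₂ := by rw [hk₁₂]; simp
  have m4 : 1 / k₃ ≤ k₁₂ := by rw [hk₁₂]; simp
  rw [div_le_iff₀ hk₁] at m2
  rw [div_le_iff₀ hB0] at m3
  rw [div_le_iff₀ hk₃] at m4
  generalize (∫ x in a..b, deriv w x ^ 2) = W at *
  generalize (∫ x in a..b, p x ^ 2) = P at *
  generalize (∫ x in a..b, q x ^ 2) = Q at *
  generalize (∫ x in a..b, r x ^ 2) = R at *
  have hy' : 1 / 2 * W + k₁ / 4 * P + B / 4 * Q + k₃ * (ε * R) ≤ y := by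
    rw [hy]; linarith
  have hmul := mul_le_mul_of_nonneg_left hy' (by linarith : 0 ≤ k₁₂)
  have e1 := mul_le_mul_of_nonneg_right m1 nW
  have e2 := mul_le_mul_of_nonneg_right m2 nP
  have e3 := mul_le_mul_of_nonneg_right m3 nQ
  have e4 := mul_le_mul_of_nonneg_right m4 nR
  linarith
end

section
/- Let k > 0, y₀ ≥ 0 and T > 0, and let y : [0,T] → ℝ be continuous with y(t) ≥ 0 for all t ∈ [0,T], differentiable on (0,T) with y'(t) ≤ k y(t)² + k y(t) for every t ∈ (0,T), and with y(0) ≤ y₀. Set N := 2(y₀ + 1) and T₀ := 1/(k N² + k N). Then y(t) ≤ y₀ + 1 for every t ∈ [0,T] with t ≤ T₀. -/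
open Set

/-!
If `y` exceeded `y₀ + 1` at some time `t ≤ T₀`, continuity would give a first time `s ≤ t` with
`y s ≥ y₀ + 1`, and `s > 0`. Since `y` rises by at least `1` on `[0, s]`, the mean value theorem
gives `c ∈ (0, s)` with `y' c ≥ 1 / s`. As `0 ≤ y c < y₀ + 1 < N`, the differential inequality
gives `y' c < k N² + k N = 1 / T₀ ≤ 1 / s`, a contradiction.
-/

/-- ODE comparison lemma (as in Lemma 3.9 of the paper): a nonnegative continuous
function `y` with `y' ≤ k y² + k y` on `(0,T)` and `y(0) ≤ y₀` satisfies
`y ≤ y₀ + 1` up to time `T₀ = 1/(k N² + k N)` with `N = 2(y₀ + 1)`. -/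
theorem ode_comparison (k y₀ T : ℝ) (hk : 0 < k) (hy₀ : 0 ≤ y₀) (hT : 0 < T)
    (y : ℝ → ℝ)
    (hcont : ContinuousOn y (Icc 0 T))
    (hnn : ∀ t ∈ Icc (0:ℝ) T, 0 ≤ y t)
    (hdiff : ∀ t ∈ Ioo (0:ℝ) T, DifferentiableAt ℝ y t ∧
      deriv y t ≤ k * (y t) ^ 2 + k * y t)
    (hy0 : y 0 ≤ y₀) :
    ∀ t ∈ Icc (0:ℝ) T,
      t ≤ 1 / (k * (2 * (y₀ + 1)) ^ 2 + k * (2 * (y₀ + 1))) → y t ≤ y₀ + 1 := by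
  intro t ht htT₀
  by_contra! hlt
  have hsub : Icc 0 t ⊆ Icc 0 T := Icc_subset_Icc_right ht.2
  -- `s` is the first time at which `y` reaches the level `y₀ + 1`.
  have hcpt : IsCompact (Icc 0 t ∩ y ⁻¹' Ici (y₀ + 1)) :=
    isCompact_Icc.of_isClosed_subset
      ((hcont.mono hsub).preimage_isClosed_of_isClosed isClosed_Icc isClosed_Ici)
      inter_subset_left
  obtain ⟨s, ⟨⟨hs0, hst⟩, hys⟩, hleast⟩ :=
    hcpt.exists_isLeast ⟨t, ⟨ht.1, le_rfl⟩, hlt.le⟩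
  replace hys : y₀ + 1 ≤ y s := hys
  have hspos : 0 < s := by
    rcases hs0.eq_or_lt with rfl | h
    · linarith
    · exact h
  have hsT : s ≤ T := hst.trans ht.2
  obtain ⟨c, hc, hslope⟩ := exists_deriv_eq_slope y hspos
    (hcont.mono (Icc_subset_Icc_right hsT))
    (fun x hx => (hdiff x ⟨hx.1, hx.2.trans_le hsT⟩).1.differentiableWithinAt)
  have hyc : y c < y₀ + 1 := by
    by_contra! h
    exact (hleast ⟨⟨hc.1.le, hc.2.le.trans hst⟩, h⟩).not_gt hc.2
  have hyc0 : 0 ≤ y c := hnn c ⟨hc.1.le, hc.2.le.trans hsT⟩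
  have hd := (hdiff c ⟨hc.1, hc.2.trans_le hsT⟩).2
  rw [hslope, sub_zero, div_le_iff₀ hspos] at hd
  have hN : 0 < k * (2 * (y₀ + 1)) ^ 2 + k * (2 * (y₀ + 1)) := by positivity
  have hsT₀ := hst.trans htT₀
  rw [le_div_iff₀ hN] at hsT₀
  have hrate : k * (y c) ^ 2 + k * y c
      < k * (2 * (y₀ + 1)) ^ 2 + k * (2 * (y₀ + 1)) := by
    have : y c < 2 * (y₀ + 1) := by linarith
    gcongr
  have := mul_lt_mul_of_pos_right hrate hspos
  linarith
end
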